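/- arXiv:math/0209364 — 2 statements merged into one kernel-verified Lean document; each statement's English description precedes it below -/
import Mathlib

section
/- In the standard coordinate arrangement of d+1 hyperspheres in S^d, any homeomorphism φ: S^d → S^d that fixes each Sᵢ⁺ = {xᵢ > 0} setwise for i = 2,...,d+1 and maps {x₁ > 0} onto {x₁ < 0} is orientation reversing. -/
/-!
A self-map `f` of the sphere with the prescribed signs satisfies `f x ≠ -r x` for every `x`, where
`r` is the reflection in the hyperplane `xⱼ = 0` whose sides are swapped; the normalized segment
from `f x` to `r x` is then a homotopy from `f` to `r`. If `f` were homotopic to the identity, so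
would be `r`, although `det r = -1`.

In place of degree theory, homotopic linear isometries `r`, `r'` of the sphere are shown to have the
same determinant by an integral argument. Coning off the homotopy gives a norm-preserving map equal
to `r` near `0` and to `r'` near infinity. Let `W` be a Lipschitz approximation of it with the same
two germs, and `G` its composition with the radial retraction onto the unit ball. Where `‖G‖ = 1`
the determinant of `DG` vanishes, so its integral over a large ball is `det r` times the volume of
the unit ball. But for Lipschitz `G` the integral `∫_B det DG` only depends on `G` outside `B`: by
Lagrange interpolation, `det DG` is a fixed linear combination of the `det (sᵢ + DG)` for `sᵢ`
larger than the Lipschitz constant; then `x ↦ sᵢ x + G x` is a bijection, `∫_B det (sᵢ + DG)` is the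
volume of the image of `B`, and the complement of this image is the image of the complement of `B`.
Comparing with `r'` in place of `W` gives `det r = det r'`.
-/

open MeasureTheory Measure Metric Module Set Filter
open scoped NNReal Topology

lemma det_eq_sum_lagrange_basis_mul_det {ι K V : Type*} [DecidableEq ι] [Field K]
    [AddCommGroup V] [Module K V] [FiniteDimensional K V] {s : Finset ι} {v : ι → K}
    (hv : InjOn v s) (hs : finrank K V < s.card) (f : V →ₗ[K] V) :
    LinearMap.det f =
      ∑ i ∈ s, (Lagrange.basis s v i).eval 0 * LinearMap.det (v i • LinearMap.id + f) := by
  have eval_charpoly : ∀ t, (-f).charpoly.eval t = LinearMap.det (t • LinearMap.id + f) := by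
    intro t
    rw [LinearMap.eval_charpoly, sub_neg_eq_add]
    rfl
  have degree_lt : (-f).charpoly.degree < s.card := by
    refine Polynomial.degree_le_natDegree.trans_lt ?_
    rw [LinearMap.charpoly_natDegree]
    exact_mod_cast hs
  calc LinearMap.det f = (-f).charpoly.eval 0 := by rw [eval_charpoly, zero_smul, zero_add]
    _ = (Lagrange.interpolate s v fun i => (-f).charpoly.eval (v i)).eval 0 := by
        rw [← Lagrange.eq_interpolate hv degree_lt]
    _ = _ := by
        simp only [Lagrange.interpolate_apply, Polynomial.eval_finsetSum, Polynomial.eval_mul,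
          Polynomial.eval_C, eval_charpoly, mul_comm]

section FiniteDimensional

variable {E : Type*} [NormedAddCommGroup E] [NormedSpace ℝ E] [FiniteDimensional ℝ E]

lemma det_smul_id_add_ne_zero_of_norm_lt {A : E →L[ℝ] E} {s : ℝ} (hA : ‖A‖ < s) :
    (s • ContinuousLinearMap.id ℝ E + A).det ≠ 0 := by
  intro hdet
  obtain ⟨v, hv, hv0⟩ := Submodule.exists_mem_ne_zero_of_ne_bot
    (LinearMap.bot_lt_ker_of_det_eq_zero hdet).ne'
  have hsv : s • v = -A v := eq_neg_of_add_eq_zero_left (by simpa using hv)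
  have hs : 0 < s := (norm_nonneg A).trans_lt hA
  have : s * ‖v‖ ≤ ‖A‖ * ‖v‖ := by
    calc s * ‖v‖ = ‖A v‖ := by rw [← norm_smul_of_nonneg hs.le, hsv, norm_neg]
      _ ≤ ‖A‖ * ‖v‖ := A.le_opNorm v
  exact hA.not_ge (le_of_mul_le_mul_right this (norm_pos_iff.2 hv0))

lemma det_smul_id_add_pos_of_norm_lt {A : E →L[ℝ] E} {s : ℝ} (hA : ‖A‖ < s) :
    0 < (s • ContinuousLinearMap.id ℝ E + A).det := by
  have hs : 0 < s := (norm_nonneg A).trans_lt hA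
  let p : ℝ → ℝ := fun t => (s • ContinuousLinearMap.id ℝ E + t • A).det
  have hp : Continuous p := ContinuousLinearMap.continuous_det.comp (by fun_prop)
  have hp_ne : ∀ t ∈ Icc (0 : ℝ) 1, p t ≠ 0 := fun t ht =>
    det_smul_id_add_ne_zero_of_norm_lt <| by
      rw [norm_smul, Real.norm_of_nonneg ht.1]
      exact (mul_le_of_le_one_left (norm_nonneg A) ht.2).trans_lt hA
  have hp0 : 0 < p 0 := by
    simpa [p, ContinuousLinearMap.det] using pow_pos hs (finrank ℝ E)
  by_contra! h
  obtain ⟨t, ht, hpt⟩ := intermediate_value_Icc' zero_le_one hp.continuousOn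
    (show (0 : ℝ) ∈ Icc (p 1) (p 0) from ⟨by simpa [p] using h, hp0.le⟩)
  exact hp_ne t ht hpt

lemma bijective_smul_add_of_lipschitzWith {G : E → E} {L : ℝ≥0} (hG : LipschitzWith L G) {s : ℝ}
    (hs : L < s) : Function.Bijective fun x => s • x + G x := by
  have hs0 : 0 < s := L.coe_nonneg.trans_lt hs
  let e : E ≃L[ℝ] E := ContinuousLinearEquiv.smulLeft (Units.mk0 s hs0.ne')
  have approx : ApproximatesLinearOn (fun x => s • x + G x) (e : E →L[ℝ] E) univ L := by
    intro x _ y _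
    have : s • x + G x - (s • y + G y) - s • (x - y) = G x - G y := by rw [smul_sub]; abel
    calc ‖s • x + G x - (s • y + G y) - s • (x - y)‖ = ‖G x - G y‖ := by rw [this]
      _ ≤ L * ‖x - y‖ := by simpa [dist_eq_norm] using hG.dist_le_mul x y
  have lt_inv_norm : Subsingleton E ∨ L < ‖(e.symm : E →L[ℝ] E)‖₊⁻¹ := by
    rcases subsingleton_or_nontrivial E with h | h
    · exact .inl h
    right
    have norm_symm_le : ‖(e.symm : E →L[ℝ] E)‖ ≤ s⁻¹ :=
      ContinuousLinearMap.opNorm_le_bound _ (by positivity) fun v =>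
        (norm_smul_of_nonneg (inv_nonneg.2 hs0.le) v).le
    rw [← NNReal.coe_lt_coe, NNReal.coe_inv, coe_nnnorm]
    exact hs.trans_le ((le_inv_comm₀ hs0 e.symm.norm_pos).2 norm_symm_le)
  exact ⟨injOn_univ.1 (approx.injOn lt_inv_norm), approx.surjective lt_inv_norm⟩

lemma exists_lipschitzWith_approx_eqOn {F : Type*} [NormedAddCommGroup F] [NormedSpace ℝ F]
    {P : E → F} (hP : Continuous P) (A : E →L[ℝ] F) (hPA : HasCompactSupport fun x => P x - A x)
    {S U : Set E} (hS : IsClosed S) (hU : U ∈ 𝓝ˢ S) (hPU : ContDiffOn ℝ 1 P U)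
    {ε : ℝ} (hε : 0 < ε) :
    ∃ (K : ℝ≥0) (W : E → F), LipschitzWith K W ∧ (∀ x, dist (W x) (P x) < ε) ∧
      EqOn W P S ∧ ∀ x, P x = A x → W x = A x := by
  obtain ⟨g, hg, hgP, hgS, hg_supp⟩ :=
    (hP.sub A.continuous).exists_contDiff_approx_and_eqOn 1 continuous_const (fun _ => hε) hS hU
      (hPU.sub A.contDiff.contDiffOn)
  obtain ⟨C, hC⟩ := ContDiff.lipschitzWith_of_hasCompactSupport
    (hPA.mono hg_supp) hg one_ne_zero
  refine ⟨C + ‖A‖₊, fun x => g x + A x, hC.add A.lipschitz, fun x => ?_, fun x hx => ?_,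
    fun x hx => ?_⟩
  · simpa [dist_eq_norm, sub_sub_eq_add_sub] using hgP x
  · simp [hgS hx]
  · have : g x = 0 := by
      by_contra h
      exact hg_supp h (sub_eq_zero.2 hx)
    simp [this]

lemma integrableOn_det_of_norm_le {α : Type*} [MeasurableSpace α] {ν : Measure α}
    {Φ : α → E →L[ℝ] E} (hΦ : Measurable Φ) {C : ℝ} (hC : ∀ x, ‖Φ x‖ ≤ C)
    {B : Set α} (hB : ν B ≠ ⊤) : IntegrableOn (fun x => (Φ x).det) B ν := by
  obtain ⟨M, hM⟩ := (isCompact_closedBall (0 : E →L[ℝ] E) C).exists_bound_of_continuousOn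
    ContinuousLinearMap.continuous_det.continuousOn
  exact Measure.integrableOn_of_bounded hB
    (ContinuousLinearMap.continuous_det.measurable.comp hΦ).aestronglyMeasurable
    (ae_of_all _ fun x => hM _ (mem_closedBall_zero_iff.2 (hC x)))

variable [MeasurableSpace E] [BorelSpace E] (μ : Measure E)

lemma integrableOn_det_smul_id_add_fderiv {G : E → E} {L : ℝ≥0} (hG : LipschitzWith L G) (s : ℝ)
    {B : Set E} (hB : μ B ≠ ⊤) :
    IntegrableOn (fun x => (s • ContinuousLinearMap.id ℝ E + fderiv ℝ G x).det) B μ :=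
  integrableOn_det_of_norm_le ((measurable_fderiv ℝ G).const_add _)
    (fun _ => (norm_add_le _ _).trans (add_le_add_right (norm_fderiv_le_of_lipschitz ℝ hG) _)) hB

variable [μ.IsAddHaarMeasure]

lemma addHaar_image_eq_zero_of_lipschitzWith {f : E → E} {K : ℝ≥0} (hf : LipschitzWith K f)
    {s : Set E} (hs : μ s = 0) : μ (f '' s) = 0 := by
  have := isAddHaarMeasure_hausdorffMeasure (E := E)
  have hs' : μH[finrank ℝ E] s = 0 := absolutelyContinuous_isAddHaarMeasure _ μ hs
  have : μH[finrank ℝ E] (f '' s) = 0 := by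
    simpa [hs'] using hf.hausdorffMeasure_image_le (Nat.cast_nonneg (finrank ℝ E)) s
  exact absolutelyContinuous_isAddHaarMeasure μ _ this

lemma setLIntegral_abs_det_fderiv_of_lipschitzWith {f : E → E} {K : ℝ≥0} (hf : LipschitzWith K f)
    {B : Set E} (hB : MeasurableSet B) (hinj : InjOn f B) :
    ∫⁻ x in B, ENNReal.ofReal |(fderiv ℝ f x).det| ∂μ = μ (f '' B) := by
  let D : Set E := {x | DifferentiableAt ℝ f x}
  have hD : MeasurableSet D := measurableSet_of_differentiableAt ℝ f
  have hD_null : μ Dᶜ = 0 := hf.ae_differentiableAt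
  have hBD : (B ∩ D : Set E) =ᵐ[μ] B := inter_ae_eq_left_of_ae_eq_univ (ae_eq_univ.2 hD_null)
  have image_eq : μ (f '' (B ∩ D)) = μ (f '' B) := by
    have hnull : μ (f '' (B \ D)) = 0 := addHaar_image_eq_zero_of_lipschitzWith μ hf
      (measure_mono_null (sdiff_subset_compl B D) hD_null)
    rw [← measure_congr (union_ae_eq_left_of_ae_eq_empty (ae_eq_empty.2 hnull)), ← image_union,
      inter_union_sdiff]
  have hderiv : ∀ x ∈ B ∩ D, HasFDerivWithinAt f (fderiv ℝ f x) (B ∩ D) x :=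
    fun _ ⟨_, hx⟩ => DifferentiableAt.hasFDerivAt hx |>.hasFDerivWithinAt
  rw [← image_eq, ← setLIntegral_congr hBD]
  exact lintegral_abs_det_fderiv_eq_addHaar_image μ (hB.inter hD) hderiv
    (hinj.mono inter_subset_left)

lemma setIntegral_det_smul_id_add_fderiv {G : E → E} {L : ℝ≥0} (hG : LipschitzWith L G) {s : ℝ}
    (hs : L < s) {B : Set E} (hB : MeasurableSet B) :
    ∫ x in B, (s • ContinuousLinearMap.id ℝ E + fderiv ℝ G x).det ∂μ =
      μ.real ((fun x => s • x + G x) '' B) := by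
  have det_pos : ∀ x, 0 < (s • ContinuousLinearMap.id ℝ E + fderiv ℝ G x).det := fun x =>
    det_smul_id_add_pos_of_norm_lt ((norm_fderiv_le_of_lipschitz ℝ hG).trans_lt hs)
  have fderiv_eq : ∀ᵐ x ∂μ, fderiv ℝ (fun x => s • x + G x) x =
      s • ContinuousLinearMap.id ℝ E + fderiv ℝ G x := by
    filter_upwards [hG.ae_differentiableAt (μ := μ)] with x hx
    exact (((hasFDerivAt_id x).const_smul s).add hx.hasFDerivAt).fderiv
  have hmeas : Measurable fun x => (s • ContinuousLinearMap.id ℝ E + fderiv ℝ G x).det :=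
    ContinuousLinearMap.continuous_det.measurable.comp ((measurable_fderiv ℝ G).const_add _)
  rw [integral_eq_lintegral_of_nonneg_ae (ae_of_all _ fun x => (det_pos x).le)
    hmeas.aestronglyMeasurable, measureReal_def,
    ← setLIntegral_abs_det_fderiv_of_lipschitzWith μ ((lipschitzWith_smul s).add hG) hB
      (bijective_smul_add_of_lipschitzWith hG hs).injective.injOn]
  congr 1
  refine lintegral_congr_ae (ae_restrict_of_ae ?_)
  filter_upwards [fderiv_eq] with x hx
  rw [hx, abs_of_pos (det_pos x)]

theorem setIntegral_det_fderiv_eq_of_eqOn_compl {G₁ G₂ : E → E} {L₁ L₂ : ℝ≥0}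
    (h₁ : LipschitzWith L₁ G₁) (h₂ : LipschitzWith L₂ G₂) {B : Set E} (hB : MeasurableSet B)
    (hBμ : μ B ≠ ⊤) (h : EqOn G₁ G₂ Bᶜ) :
    ∫ x in B, (fderiv ℝ G₁ x).det ∂μ = ∫ x in B, (fderiv ℝ G₂ x).det ∂μ := by
  let L : ℝ≥0 := max L₁ L₂
  let nodes : Finset ℕ := Finset.range (finrank ℝ E + 1)
  let v : ℕ → ℝ := fun i => L + 1 + i
  have hv : Function.Injective v := fun i j hij => by simpa [v] using hij
  have hLv : ∀ i, (L : ℝ) < v i := fun i => by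
    linarith [i.cast_nonneg (α := ℝ), show v i = L + 1 + i from rfl]
  have integral_eq_sum : ∀ G : E → E, LipschitzWith L G → ∫ x in B, (fderiv ℝ G x).det ∂μ =
      ∑ i ∈ nodes, (Lagrange.basis nodes v i).eval 0 *
        μ.real ((fun x => v i • x + G x) '' B) := by
    intro G hG
    calc ∫ x in B, (fderiv ℝ G x).det ∂μ
      _ = ∫ x in B, ∑ i ∈ nodes, (Lagrange.basis nodes v i).eval 0 *
            (v i • ContinuousLinearMap.id ℝ E + fderiv ℝ G x).det ∂μ :=
          integral_congr_ae <| ae_of_all _ fun x =>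
            det_eq_sum_lagrange_basis_mul_det hv.injOn (by simp [nodes]) _
      _ = ∑ i ∈ nodes, ∫ x in B, (Lagrange.basis nodes v i).eval 0 *
            (v i • ContinuousLinearMap.id ℝ E + fderiv ℝ G x).det ∂μ :=
          integral_finsetSum _ fun i _ =>
            (integrableOn_det_smul_id_add_fderiv μ hG (v i) hBμ).const_mul _
      _ = _ := by
          simp only [integral_const_mul, setIntegral_det_smul_id_add_fderiv μ hG (hLv _) hB]
  have image_eq : ∀ i, (fun x => v i • x + G₁ x) '' B = (fun x => v i • x + G₂ x) '' B := by
    intro i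
    have bij₁ := bijective_smul_add_of_lipschitzWith (h₁.weaken (le_max_left _ _)) (hLv i)
    have bij₂ := bijective_smul_add_of_lipschitzWith (h₂.weaken (le_max_right _ _)) (hLv i)
    apply compl_injective
    rw [← image_compl_eq bij₁, ← image_compl_eq bij₂]
    exact image_congr fun x hx => congrArg (v i • x + ·) (h hx)
  rw [integral_eq_sum G₁ (h₁.weaken (le_max_left _ _)),
    integral_eq_sum G₂ (h₂.weaken (le_max_right _ _))]
  simp only [image_eq]

end FiniteDimensional

section UnitBall

variable {E : Type*} [NormedAddCommGroup E] [NormedSpace ℝ E]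

/-- The radial retraction of a normed space onto its closed unit ball. -/
noncomputable def unitBallRetraction (x : E) : E := (max 1 ‖x‖)⁻¹ • x

lemma unitBallRetraction_of_norm_le {x : E} (hx : ‖x‖ ≤ 1) : unitBallRetraction x = x := by
  rw [unitBallRetraction, max_eq_left hx, inv_one, one_smul]

lemma norm_unitBallRetraction_of_one_le {x : E} (hx : 1 ≤ ‖x‖) : ‖unitBallRetraction x‖ = 1 := by
  rw [unitBallRetraction, max_eq_right hx, norm_smul, norm_inv, norm_norm,
    inv_mul_cancel₀ (by positivity)]

lemma lipschitzWith_unitBallRetraction : LipschitzWith 2 (unitBallRetraction : E → E) := by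
  refine LipschitzWith.of_dist_le_mul fun x y => ?_
  simp only [unitBallRetraction, dist_eq_norm]
  set a := max 1 ‖x‖
  set b := max 1 ‖y‖
  have ha : 1 ≤ a := le_max_left _ _
  have hb : 0 < b := zero_lt_one.trans_le (le_max_left _ _)
  have hab : |b - a| ≤ ‖x - y‖ := by
    rw [abs_sub_comm]
    refine (abs_max_sub_max_le_max 1 ‖x‖ 1 ‖y‖).trans ?_
    simpa using abs_norm_sub_norm_le x y
  have hy : ‖b⁻¹ • y‖ ≤ 1 := by
    rw [norm_smul_of_nonneg (by positivity), inv_mul_le_one₀ hb]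
    exact le_max_right _ _
  have hsub : a⁻¹ • x - b⁻¹ • y = a⁻¹ • ((x - y) + (b - a) • b⁻¹ • y) := by
    match_scalars <;> field_simp
    ring
  calc ‖a⁻¹ • x - b⁻¹ • y‖ = a⁻¹ * ‖(x - y) + (b - a) • b⁻¹ • y‖ := by
        rw [hsub, norm_smul_of_nonneg (by positivity)]
    _ ≤ 1 * (‖x - y‖ + |b - a| * ‖b⁻¹ • y‖) := by
        gcongr
        · exact inv_le_one_of_one_le₀ ha
        · exact (norm_add_le _ _).trans_eq (by rw [norm_smul (b - a), Real.norm_eq_abs])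
    _ ≤ 1 * (‖x - y‖ + ‖x - y‖ * 1) := by gcongr
    _ = (2 : ℝ≥0) * ‖x - y‖ := by norm_num; ring

end UnitBall

section Sphere

variable {E : Type*} [NormedAddCommGroup E] [NormedSpace ℝ E]

/-- The self-map of the unit sphere induced by a linear isometry. -/
def sphereMap (r : E →ₗᵢ[ℝ] E) : C(sphere (0 : E) 1, sphere (0 : E) 1) where
  toFun x := ⟨r x, by simp⟩
  continuous_toFun := by fun_prop

/-- The map sending the sphere of radius `ρ` to itself by the rescaled self-map `h ρ` of the unit
sphere, so that a homotopy of self-maps of the sphere becomes a map interpolating between the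
cones over its two ends. -/
noncomputable def polarMap (h : C(ℝ, C(sphere (0 : E) 1, sphere (0 : E) 1))) (x : E) : E :=
  open Classical in
  if hx : x = 0 then 0 else ‖x‖ • (h ‖x‖ (homeomorphUnitSphereProd E ⟨x, hx⟩).1 : E)

lemma norm_polarMap (h : C(ℝ, C(sphere (0 : E) 1, sphere (0 : E) 1))) (x : E) :
    ‖polarMap h x‖ = ‖x‖ := by
  by_cases hx : x = 0
  · simp [polarMap, hx]
  · rw [polarMap, dif_neg hx, norm_smul, norm_norm, norm_eq_of_mem_sphere, mul_one]

lemma polarMap_eq_of_forall_eq {h : C(ℝ, C(sphere (0 : E) 1, sphere (0 : E) 1))} {x : E}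
    {r : E →ₗᵢ[ℝ] E} (hr : ∀ y, h ‖x‖ y = sphereMap r y) : polarMap h x = r x := by
  by_cases hx : x = 0
  · simp [polarMap, hx]
  · rw [polarMap, dif_neg hx, hr]
    simp [sphereMap, hx]

lemma continuous_polarMap [ProperSpace E] (h : C(ℝ, C(sphere (0 : E) 1, sphere (0 : E) 1))) :
    Continuous (polarMap h) := by
  rw [continuous_iff_continuousAt]
  intro x
  by_cases hx : x = 0
  · subst hx
    have polarMap_zero : polarMap h 0 = 0 := norm_eq_zero.1 (by rw [norm_polarMap, norm_zero])
    rw [ContinuousAt, polarMap_zero, tendsto_zero_iff_norm_tendsto_zero]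
    simpa only [norm_polarMap] using tendsto_norm_zero
  · have restrict_eq : ({0}ᶜ : Set E).domRestrict (polarMap h) = fun y : ({0}ᶜ : Set E) =>
        ‖(y : E)‖ • (h ‖(y : E)‖ (homeomorphUnitSphereProd E y).1 : E) :=
      funext fun y => dif_neg y.2
    have : ContinuousOn (polarMap h) {0}ᶜ := by
      rw [continuousOn_iff_continuous_domRestrict, restrict_eq]
      fun_prop
    exact this.continuousAt (isOpen_compl_singleton.mem_nhds hx)

lemma lineMap_ne_zero_of_ne_neg {u v : E} (huv : ‖u‖ = ‖v‖) (h : u ≠ -v) {t : ℝ}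
    (ht : t ∈ Icc (0 : ℝ) 1) : AffineMap.lineMap u v t ≠ 0 := by
  intro h0
  rw [AffineMap.lineMap_apply_module] at h0
  have hsmul : (1 - t) • u = -(t • v) := eq_neg_of_add_eq_zero_left h0
  have hv : ‖v‖ ≠ 0 := fun hv => h <| by
    rw [norm_eq_zero.1 (huv.trans hv), norm_eq_zero.1 hv, neg_zero]
  have ht_half : 1 - t = t := by
    have := congrArg norm hsmul
    rw [norm_neg, norm_smul_of_nonneg (sub_nonneg.2 ht.2), norm_smul_of_nonneg ht.1, huv] at this
    exact mul_right_cancel₀ hv this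
  rw [ht_half, ← smul_neg] at hsmul
  exact h (smul_right_injective E (by linarith : t ≠ 0) hsmul)

lemma homotopic_of_forall_ne_neg {X : Type*} [TopologicalSpace X] (f g : C(X, sphere (0 : E) 1))
    (h : ∀ x, (f x : E) ≠ -(g x : E)) : f.Homotopic g := by
  let k : unitInterval × X → E := fun p => AffineMap.lineMap (f p.2 : E) (g p.2 : E) (p.1 : ℝ)
  have hk : Continuous k := by
    simp only [k, AffineMap.lineMap_apply_module]
    fun_prop
  have hk0 : ∀ p, k p ≠ 0 := fun p =>
    lineMap_ne_zero_of_ne_neg (by simp) (h p.2) p.1.2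
  have normalize_cont : Continuous fun p => ‖k p‖⁻¹ • k p :=
    (hk.norm.inv₀ fun p => norm_ne_zero_iff.2 (hk0 p)).smul hk
  have normalize_mem : ∀ p, ‖k p‖⁻¹ • k p ∈ sphere (0 : E) 1 := fun p => by
    simp [norm_smul, hk0]
  exact ⟨{
    toFun p := ⟨‖k p‖⁻¹ • k p, normalize_mem p⟩
    continuous_toFun := normalize_cont.subtype_mk normalize_mem
    map_zero_left x := by ext1; simp [k]
    map_one_left x := by ext1; simp [k] }⟩

end Sphere

section InnerProductSpace

variable {E : Type*} [NormedAddCommGroup E] [InnerProductSpace ℝ E]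

lemma not_surjective_fderiv_of_eventually_norm_eq_one {G : E → E} {x : E}
    (h : ∀ᶠ y in 𝓝 x, ‖G y‖ = 1) : ¬ Function.Surjective (fderiv ℝ G x) := by
  intro hsurj
  obtain ⟨v, hv⟩ := hsurj (G x)
  have hG : ‖G x‖ = 1 := h.self_of_nhds
  have hd : DifferentiableAt ℝ G x := by
    by_contra hd
    simp [← hv, fderiv_zero_of_not_differentiableAt hd] at hG
  have fderiv_eq_zero : HasFDerivAt (fun y => ‖G y‖ ^ 2) (0 : E →L[ℝ] ℝ) x :=
    (hasFDerivAt_const (1 : ℝ) x).congr_of_eventuallyEq <| by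
      filter_upwards [h] with y hy
      rw [hy, one_pow]
  have := congr($(hd.hasFDerivAt.norm_sq.unique fderiv_eq_zero) v)
  simp [hv, hG] at this

variable [FiniteDimensional ℝ E]

lemma det_fderiv_eq_zero_of_eventually_norm_eq_one {G : E → E} {x : E}
    (h : ∀ᶠ y in 𝓝 x, ‖G y‖ = 1) : (fderiv ℝ G x).det = 0 := by
  by_contra hdet
  exact not_surjective_fderiv_of_eventually_norm_eq_one h
    (LinearMap.equivOfDetNeZero (fderiv ℝ G x).toLinearMap hdet).surjective

lemma det_fderiv_unitBallRetraction_comp {W : E → E} {r : E →ₗᵢ[ℝ] E}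
    (hWr : ∀ x, ‖x‖ < 1 → W x = r x) (hW : ∀ x, 1 < ‖x‖ → 1 ≤ ‖W x‖) {x : E} (hx : ‖x‖ ≠ 1) :
    (fderiv ℝ (unitBallRetraction ∘ W) x).det =
      (ball (0 : E) 1).indicator (fun _ => LinearMap.det r.toLinearMap) x := by
  rcases hx.lt_or_gt with hx | hx
  · have : unitBallRetraction ∘ W =ᶠ[𝓝 x] r.toContinuousLinearMap := by
      filter_upwards [continuous_norm.continuousAt.eventually_lt_const hx] with y hy
      simp [hWr y hy, unitBallRetraction_of_norm_le (x := r y) (by simpa using hy.le)]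
    rw [indicator_of_mem (by simpa using hx), this.fderiv_eq, ContinuousLinearMap.fderiv]
    rfl
  · rw [indicator_of_notMem (by simpa using hx.le)]
    apply det_fderiv_eq_zero_of_eventually_norm_eq_one
    filter_upwards [continuous_norm.continuousAt.eventually_const_lt hx] with y hy
    exact norm_unitBallRetraction_of_one_le (hW y hy)

lemma setIntegral_det_fderiv_unitBallRetraction_comp [MeasurableSpace E] [BorelSpace E]
    (μ : Measure E) [μ.IsAddHaarMeasure] {W : E → E} {r : E →ₗᵢ[ℝ] E}
    (hWr : ∀ x, ‖x‖ < 1 → W x = r x) (hW : ∀ x, 1 < ‖x‖ → 1 ≤ ‖W x‖)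
    {B : Set E} (hB : ball 0 1 ⊆ B) :
    ∫ x in B, (fderiv ℝ (unitBallRetraction ∘ W) x).det ∂μ =
      LinearMap.det r.toLinearMap * μ.real (ball 0 1) := by
  have hsphere : ∀ᵐ x ∂μ, x ∉ sphere (0 : E) 1 :=
    measure_eq_zero_iff_ae_notMem.1 (addHaar_sphere_of_ne_zero μ 0 one_ne_zero)
  have det_eq : ∀ᵐ x ∂μ.restrict B, (fderiv ℝ (unitBallRetraction ∘ W) x).det =
      (ball (0 : E) 1).indicator (fun _ => LinearMap.det r.toLinearMap) x := by
    filter_upwards [ae_restrict_of_ae hsphere] with x hx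
    exact det_fderiv_unitBallRetraction_comp hWr hW (by simpa using hx)
  rw [integral_congr_ae det_eq, setIntegral_indicator measurableSet_ball, setIntegral_const,
    inter_eq_self_of_subset_right hB, smul_eq_mul, mul_comm]

lemma det_eq_of_lipschitzWith_interpolation {W : E → E} {K : ℝ≥0} (hW : LipschitzWith K W)
    {r r' : E →ₗᵢ[ℝ] E} {R : ℝ} (hR : 1 ≤ R) (hWr : ∀ x, ‖x‖ < 1 → W x = r x)
    (hWr' : ∀ x, R < ‖x‖ → W x = r' x) (hW_norm : ∀ x, 1 < ‖x‖ → 1 ≤ ‖W x‖) :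
    LinearMap.det r.toLinearMap = LinearMap.det r'.toLinearMap := by
  borelize E
  let μ : Measure E := volume
  have hball : ball (0 : E) 1 ⊆ closedBall 0 R := ball_subset_closedBall.trans
    (closedBall_subset_closedBall hR)
  have hpos : 0 < μ.real (ball 0 1) := ENNReal.toReal_pos (measure_ball_pos μ 0 one_pos).ne'
    measure_ball_lt_top.ne
  refine mul_right_cancel₀ hpos.ne' ?_
  calc LinearMap.det r.toLinearMap * μ.real (ball 0 1)
    _ = ∫ x in closedBall 0 R, (fderiv ℝ (unitBallRetraction ∘ W) x).det ∂μ :=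
        (setIntegral_det_fderiv_unitBallRetraction_comp μ hWr hW_norm hball).symm
    _ = ∫ x in closedBall 0 R, (fderiv ℝ (unitBallRetraction ∘ r') x).det ∂μ :=
        setIntegral_det_fderiv_eq_of_eqOn_compl μ (lipschitzWith_unitBallRetraction.comp hW)
          (lipschitzWith_unitBallRetraction.comp r'.lipschitz) measurableSet_closedBall
          measure_closedBall_lt_top.ne
          fun x hx => congrArg unitBallRetraction (hWr' x (by simpa using hx))
    _ = LinearMap.det r'.toLinearMap * μ.real (ball 0 1) :=
        setIntegral_det_fderiv_unitBallRetraction_comp μ (fun _ _ => rfl)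
          (fun x hx => by simpa using hx.le) hball

theorem det_eq_of_homotopic_sphereMap {r r' : E →ₗᵢ[ℝ] E}
    (h : (sphereMap r).Homotopic (sphereMap r')) :
    LinearMap.det r.toLinearMap = LinearMap.det r'.toLinearMap := by
  obtain ⟨H⟩ := h
  -- The homotopy runs over the radii `3 ≤ ‖x‖ ≤ 4`. An approximation `W` of `P` with error `1` has
  -- `‖W x‖ ≥ 1` where `‖P x‖ = ‖x‖ ≥ 2`, so it need only be exact for `‖x‖ ≤ 2` and `‖x‖ ≥ 4`.
  let P : E → E := polarMap (H.extend.comp ⟨fun ρ => ρ - 3, by fun_prop⟩)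
  have hPr : ∀ x, ‖x‖ ≤ 3 → P x = r x := fun x hx =>
    polarMap_eq_of_forall_eq fun y => H.extend_apply_of_le_zero (by simpa using hx) y
  have hPr' : ∀ x, 4 ≤ ‖x‖ → P x = r' x := fun x hx =>
    polarMap_eq_of_forall_eq fun y => H.extend_apply_of_one_le (by simp; linarith) y
  have hsupp : HasCompactSupport fun x => P x - r' x :=
    HasCompactSupport.intro (isCompact_closedBall 0 4) fun x hx =>
      sub_eq_zero.2 (hPr' x (le_of_lt (by simpa using hx)))
  have hsmooth : ContDiffOn ℝ 1 P (ball 0 3) :=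
    r.contDiff.contDiffOn.congr fun x hx => hPr x (mem_ball_zero_iff.1 hx).le
  obtain ⟨K, W, hW, hWP, hWr, hWr'⟩ := exists_lipschitzWith_approx_eqOn
    (continuous_polarMap _) r'.toContinuousLinearMap hsupp isClosed_closedBall
    (isOpen_ball.mem_nhdsSet.2 (closedBall_subset_ball (by norm_num : (2 : ℝ) < 3)))
    hsmooth one_pos
  have hWr : ∀ x, ‖x‖ ≤ 2 → W x = r x := fun x hx =>
    (hWr (by simpa using hx)).trans (hPr x (by linarith))
  refine det_eq_of_lipschitzWith_interpolation hW (by norm_num : (1 : ℝ) ≤ 4)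
    (fun x hx => hWr x (by linarith)) (fun x hx => hWr' x (hPr' x hx.le)) fun x hx => ?_
  rcases le_or_gt ‖x‖ 2 with hx2 | hx2
  · rw [hWr x hx2, r.norm_map]
    exact hx.le
  · have := norm_sub_norm_le (P x) (W x)
    rw [norm_polarMap, ← dist_eq_norm, dist_comm] at this
    linarith [hWP x]

end InnerProductSpace

section EuclideanSpace

variable {ι : Type*} [Fintype ι] [DecidableEq ι]

/-- The reflection of Euclidean space in the coordinate hyperplane `xⱼ = 0`. -/
noncomputable def coordReflection (j : ι) : EuclideanSpace ℝ ι →ₗᵢ[ℝ] EuclideanSpace ℝ ι :=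
  (ℝ ∙ EuclideanSpace.single j (1 : ℝ))ᗮ.reflection.toLinearIsometry

lemma coordReflection_apply (j : ι) (x : EuclideanSpace ℝ ι) (i : ι) :
    coordReflection j x i = if i = j then -x i else x i := by
  rcases eq_or_ne i j with rfl | hij
  · simp [coordReflection, Submodule.reflection_orthogonal_apply,
      Submodule.reflection_singleton_apply, EuclideanSpace.inner_single_left]
    ring
  · simp [coordReflection, Submodule.reflection_orthogonal_apply,
      Submodule.reflection_singleton_apply, hij]

lemma det_coordReflection (j : ι) : LinearMap.det (coordReflection j).toLinearMap = -1 := by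
  have hfinrank : finrank ℝ (ℝ ∙ EuclideanSpace.single j (1 : ℝ))ᗮᗮ = 1 := by
    rw [Submodule.orthogonal_orthogonal, finrank_span_singleton (by simp)]
  have := (ℝ ∙ EuclideanSpace.single j (1 : ℝ))ᗮ.det_reflection
  rwa [hfinrank, pow_one] at this

lemma homotopic_sphereMap_coordReflection {j : ι}
    {f : C(sphere (0 : EuclideanSpace ℝ ι) 1, sphere (0 : EuclideanSpace ℝ ι) 1)}
    (hj : ∀ x, 0 < x.1 j ↔ (f x).1 j < 0) (hf : ∀ i, i ≠ j → ∀ x, 0 < x.1 i ↔ 0 < (f x).1 i) :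
    f.Homotopic (sphereMap (coordReflection j)) := by
  refine homotopic_of_forall_ne_neg _ _ fun x hx => ne_zero_of_mem_unit_sphere x ?_
  ext i
  have apply_eq : (f x).1 i = -(coordReflection j x i) := congr($hx i)
  have pos_iff_neg : 0 < x.1 i ↔ x.1 i < 0 := by
    rw [coordReflection_apply] at apply_eq
    rcases eq_or_ne i j with rfl | hij
    · rw [hj x, apply_eq, if_pos rfl, neg_neg]
    · rw [hf i hij x, apply_eq, if_neg hij, neg_pos]
  exact le_antisymm (not_lt.1 fun h => (pos_iff_neg.1 h).not_gt h)
    (not_lt.1 fun h => (pos_iff_neg.2 h).not_gt h)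

end EuclideanSpace

theorem side_swapping_homeo_orientation_reversing_general {ι : Type*} [Fintype ι] (j : ι)
    (f : C(sphere (0 : EuclideanSpace ℝ ι) 1, sphere (0 : EuclideanSpace ℝ ι) 1))
    (hj : ∀ x : sphere (0 : EuclideanSpace ℝ ι) 1,
      0 < (x : EuclideanSpace ℝ ι) j ↔ (f x : EuclideanSpace ℝ ι) j < 0)
    (hf : ∀ i, i ≠ j → ∀ x : sphere (0 : EuclideanSpace ℝ ι) 1,
      0 < (x : EuclideanSpace ℝ ι) i ↔ 0 < (f x : EuclideanSpace ℝ ι) i) :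
    ¬ f.Homotopic (ContinuousMap.id _) := by
  classical
  intro hf_id
  have reflection_id : (sphereMap (coordReflection j)).Homotopic (sphereMap .id) :=
    (homotopic_sphereMap_coordReflection hj hf).symm.trans hf_id
  have det_eq := det_eq_of_homotopic_sphereMap reflection_id
  rw [det_coordReflection] at det_eq
  norm_num at det_eq

/-- in the standard coordinate arrangement of `d+1` hyperspheres in
`S^d`, any self-homeomorphism `φ` of `S^d` fixing each side `Sᵢ⁺ = {xᵢ > 0}` setwise
for `i ≥ 2` and mapping `{x₁ > 0}` onto `{x₁ < 0}` is orientation reversing.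
(Orientation reversing is formalized, via Hopf's theorem for self-maps of spheres,
as: `φ` is not homotopic to the identity.) -/
theorem side_swapping_homeo_orientation_reversing (d : ℕ)
    (φ : ↥(Metric.sphere (0 : EuclideanSpace ℝ (Fin (d + 1))) 1) ≃ₜ
      ↥(Metric.sphere (0 : EuclideanSpace ℝ (Fin (d + 1))) 1))
    (h0 : ∀ x : ↥(Metric.sphere (0 : EuclideanSpace ℝ (Fin (d + 1))) 1),
      0 < (x : EuclideanSpace ℝ (Fin (d + 1))) 0 ↔
        ((φ x : EuclideanSpace ℝ (Fin (d + 1))) 0 < 0))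
    (hi : ∀ i : Fin (d + 1), i ≠ 0 →
      ∀ x : ↥(Metric.sphere (0 : EuclideanSpace ℝ (Fin (d + 1))) 1),
        0 < (x : EuclideanSpace ℝ (Fin (d + 1))) i ↔
          0 < (φ x : EuclideanSpace ℝ (Fin (d + 1))) i) :
    ¬ (ContinuousMap.mk (φ : ↥(Metric.sphere (0 : EuclideanSpace ℝ (Fin (d + 1))) 1) →
          ↥(Metric.sphere (0 : EuclideanSpace ℝ (Fin (d + 1))) 1))
        φ.continuous).Homotopic (ContinuousMap.id _) :=
  side_swapping_homeo_orientation_reversing_general 0 ⟨φ, φ.continuous⟩ h0 hi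
end

section
/- Let χ be a chirotope of rank r > 2 over E, and fix x₁,...,x_{r-2} ∈ 𝐄 such that χ([x₁,...,x_r]) = 1 for some x_{r-1},x_r. Then the set C(x₁,...,x_{r-2}) = { [y_{r-1},y_r] : χ([x₁,...,x_{r-2},y_{r-1},y_r]) = 1 } is the set of positively oriented bases of a chirotope of rank 2 over the subset of E consisting of elements appearing in some member of C(x₁,...,x_{r-2}). -/
/-- The bar involution on signed indices: `(e, b) ↦ (e, ¬b)`. -/
def bar {α : Type*} (x : α × Bool) : α × Bool := (x.1, !x.2)

/-- A chirotope of rank `r` over `α`: a map from `r`-tuples of signed indices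
(oriented `(r-1)`-simplices) to `{-1,0,+1}` satisfying axioms (C1)–(C4). -/
structure IsChirotope (r : ℕ) (α : Type*) (χ : (Fin r → α × Bool) → ℤ) : Prop where
  rpos : 0 < r
  values : ∀ σ : Fin r → α × Bool, χ σ = -1 ∨ χ σ = 0 ∨ χ σ = 1
  degenerate : ∀ σ : Fin r → α × Bool,
      ¬ Function.Injective (fun i => (σ i).1) → χ σ = 0
  c1 : ∀ e : α, ∃ τ : Fin r → α, (∃ i, τ i = e) ∧ χ (fun i => (τ i, true)) ≠ 0
  c2neg : ∀ (σ : Fin r → α × Bool) (i : Fin r), i.val = r - 1 →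
      χ (Function.update σ i (bar (σ i))) = - χ σ
  c2swap : ∀ (σ : Fin r → α × Bool) (i j : Fin r), j.val = i.val + 1 →
      χ (fun m => if m = i then bar (σ j) else if m = j then σ i else σ m) = χ σ
  c3 : ∀ σ τ : Fin r → α × Bool, χ σ ≠ 0 → χ τ ≠ 0 →
      ∃ i, χ (Function.update σ ⟨r - 1, Nat.sub_lt rpos one_pos⟩ (τ i)) ≠ 0
  c4 : ∀ (σ : Fin r → α × Bool) (y₁ y₂ : α × Bool),
      0 ≤ χ (Function.update σ ⟨r - 2, Nat.sub_lt rpos two_pos⟩ y₁) *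
          χ (Function.update σ ⟨r - 1, Nat.sub_lt rpos one_pos⟩ y₂) →
      0 ≤ χ (Function.update σ ⟨r - 2, Nat.sub_lt rpos two_pos⟩ y₂) *
          χ (Function.update σ ⟨r - 1, Nat.sub_lt rpos one_pos⟩ (bar y₁)) →
      0 ≤ χ σ *
          χ (Function.update (Function.update σ ⟨r - 2, Nat.sub_lt rpos two_pos⟩ y₁)
              ⟨r - 1, Nat.sub_lt rpos one_pos⟩ y₂)

/-- Extend the fixed `(r-2)`-tuple `x` by two further signed indices `y₁, y₂` to an
`r`-tuple `[x₁,…,x_{r-2},y₁,y₂]`. -/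
def extTwo {α : Type*} (r : ℕ) (x : Fin (r - 2) → α × Bool) (y₁ y₂ : α × Bool) :
    Fin r → α × Bool := fun i =>
  if h : i.val < r - 2 then x ⟨i.val, h⟩ else if i.val = r - 2 then y₁ else y₂

/-!
The contraction `σ ↦ χ [x, σ]` inherits every axiom of `χ` except possibly (C1) from the same axiom,
applied to tuples starting with `x`. In (C3) the exchanged entry cannot come from `x`, since it
would then be repeated. Finally, (C1) holds on the elements occurring in positively oriented bases,
because (C2) makes the vanishing of `χ` independent of signs.
-/

section

open Function

variable {α : Type*}

theorem eq_or_eq_bar_of_fst_eq {a b : α × Bool} (hab : a.1 = b.1) : a = b ∨ a = bar b := by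
  rcases a with ⟨a, s⟩
  rcases b with ⟨b, t⟩
  cases s <;> cases t <;> simp_all [bar]

theorem bar_map {ι : Type*} (f : ι → α) (a : ι × Bool) :
    bar (Prod.map f id a) = Prod.map f id (bar a) :=
  rfl

theorem castAdd_ne_natAdd {m n : ℕ} (i : Fin m) (j : Fin n) : Fin.castAdd n i ≠ Fin.natAdd m j :=
  Fin.ne_of_lt (Fin.lt_def.2 (by simp; omega))

theorem update_append_natAdd {β : Type*} {m n : ℕ} (x : Fin m → β) (σ : Fin n → β) (j : Fin n)
    (b : β) :
    update (Fin.append x σ) (Fin.natAdd m j) b = Fin.append x (update σ j b) := by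
  ext1 i
  refine Fin.addCases (fun i => ?_) (fun i => ?_) i
  · rw [update_of_ne (castAdd_ne_natAdd i j), Fin.append_left, Fin.append_left]
  · simp [update_apply]

theorem append_eq_extTwo {m : ℕ} (x : Fin m → α × Bool) (σ : Fin 2 → α × Bool) :
    Fin.append x σ = extTwo (m + 2) x (σ 0) (σ 1) := by
  ext1 i
  refine Fin.addCases (fun i => ?_) (fun i => ?_) i
  · simp [extTwo]
  · fin_cases i <;> simp [extTwo]

namespace IsChirotope

section Rank

variable {r : ℕ} {χ : (Fin r → α × Bool) → ℤ}

theorem apply_eq_zero_of_fst_eq (h : IsChirotope r α χ) {σ : Fin r → α × Bool} {i j : Fin r}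
    (hij : i ≠ j) (hσ : (σ i).1 = (σ j).1) : χ σ = 0 :=
  h.degenerate σ fun hinj => hij (hinj hσ)

theorem apply_update_update_bar (h : IsChirotope r α χ) (σ : Fin r → α × Bool) {i j : Fin r}
    (hij : j.val = i.val + 1) :
    χ (update (update σ j (σ i)) i (bar (σ j))) = χ σ := by
  rw [← h.c2swap σ i j hij]
  congr 1
  ext1 k
  simp only [update_apply]

/-- (C2) only postulates this for the last coordinate; transposing `i` with `i + 1` moves the sign
one place to the right. -/
theorem apply_update_bar (h : IsChirotope r α χ) (σ : Fin r → α × Bool) (i : Fin r) :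
    χ (update σ i (bar (σ i))) = -χ σ := by
  obtain ⟨r, rfl⟩ := Nat.exists_eq_add_of_le' h.rpos
  induction i using Fin.reverseInduction generalizing σ with
  | last => exact h.c2neg σ (Fin.last r) rfl
  | cast i ih =>
    have hne : i.castSucc ≠ i.succ := Fin.castSucc_lt_succ.ne
    have hsucc : i.succ.val = i.castSucc.val + 1 := rfl
    let swap (ρ : Fin (r + 1) → α × Bool) :=
      update (update ρ i.succ (ρ i.castSucc)) i.castSucc (bar (ρ i.succ))
    have swap_update : swap (update σ i.castSucc (bar (σ i.castSucc))) =
        update (swap σ) i.succ (bar (swap σ i.succ)) := by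
      ext1 k
      simp only [swap, update_apply]
      grind
    calc
      χ (update σ i.castSucc (bar (σ i.castSucc)))
        = χ (swap (update σ i.castSucc (bar (σ i.castSucc)))) :=
          (h.apply_update_update_bar _ hsucc).symm
      _ = χ (update (swap σ) i.succ (bar (swap σ i.succ))) := congrArg χ swap_update
      _ = -χ (swap σ) := ih _
      _ = -χ σ := congrArg Neg.neg (h.apply_update_update_bar σ hsucc)

theorem apply_ne_zero_of_fst_eq (h : IsChirotope r α χ) {σ τ : Fin r → α × Bool}
    (hτ : ∀ i, (τ i).1 = (σ i).1) (hσ : χ σ ≠ 0) : χ τ ≠ 0 := by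
  suffices ∀ s : Finset (Fin r), χ (s.piecewise τ σ) ≠ 0 by
    simpa using this Finset.univ
  intro s
  induction s using Finset.induction_on with
  | empty => simpa using hσ
  | insert i s hi ih =>
    set ρ := s.piecewise τ σ
    have hρ : (τ i).1 = (ρ i).1 := by simpa [ρ, hi] using hτ i
    rw [Finset.piecewise_insert]
    rcases eq_or_eq_bar_of_fst_eq hρ with heq | heq
    · rwa [heq, update_eq_self]
    · rwa [heq, h.apply_update_bar, neg_ne_zero]

end Rank

section Contraction

variable {m n : ℕ} {χ : (Fin (m + n) → α × Bool) → ℤ}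

theorem append_update_bar (h : IsChirotope (m + n) α χ) (x : Fin m → α × Bool)
    (σ : Fin n → α × Bool) (i : Fin n) :
    χ (Fin.append x (update σ i (bar (σ i)))) = -χ (Fin.append x σ) := by
  simpa [update_append_natAdd] using h.apply_update_bar (Fin.append x σ) (Fin.natAdd m i)

theorem append_update_update_bar (h : IsChirotope (m + n) α χ) (x : Fin m → α × Bool)
    (σ : Fin n → α × Bool) {i j : Fin n} (hij : j.val = i.val + 1) :
    χ (Fin.append x (update (update σ j (σ i)) i (bar (σ j)))) = χ (Fin.append x σ) := by
  have hij' : (Fin.natAdd m j).val = (Fin.natAdd m i).val + 1 := by simp [hij, add_assoc]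
  simpa [update_append_natAdd] using h.apply_update_update_bar (Fin.append x σ) hij'

theorem append_degenerate (h : IsChirotope (m + n) α χ) (x : Fin m → α × Bool)
    (σ : Fin n → α × Bool) (hσ : ¬ Injective fun i => (σ i).1) : χ (Fin.append x σ) = 0 := by
  refine h.degenerate _ fun hinj => hσ fun i j hij => ?_
  exact Fin.natAdd_injective n m (hinj (by simpa using hij))

theorem append_exchange (h : IsChirotope (m + n) α χ) (x : Fin m → α × Bool) (hn : 0 < n)
    {σ τ : Fin n → α × Bool} (hσ : χ (Fin.append x σ) ≠ 0) (hτ : χ (Fin.append x τ) ≠ 0) :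
    ∃ i, χ (Fin.append x (update σ ⟨n - 1, Nat.sub_lt hn one_pos⟩ (τ i))) ≠ 0 := by
  obtain ⟨i, hi⟩ := h.c3 _ _ hσ hτ
  let k : Fin n := ⟨n - 1, Nat.sub_lt hn one_pos⟩
  have hk : (⟨m + n - 1, Nat.sub_lt h.rpos one_pos⟩ : Fin (m + n)) = Fin.natAdd m k :=
    Fin.ext (Nat.add_sub_assoc hn m)
  rw [hk, update_append_natAdd] at hi
  cases i using Fin.addCases with
  | left i => exact absurd (h.apply_eq_zero_of_fst_eq (castAdd_ne_natAdd i k) (by simp)) hi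
  | right i => exact ⟨i, by simpa only [Fin.append_right] using hi⟩

theorem append_grassmann_plucker (h : IsChirotope (m + n) α χ) (x : Fin m → α × Bool)
    (hn : 2 ≤ n) (σ : Fin n → α × Bool) (y₁ y₂ : α × Bool) :
    let i : Fin n := ⟨n - 2, Nat.sub_lt (by omega) two_pos⟩
    let j : Fin n := ⟨n - 1, Nat.sub_lt (by omega) one_pos⟩
    0 ≤ χ (Fin.append x (update σ i y₁)) * χ (Fin.append x (update σ j y₂)) →
    0 ≤ χ (Fin.append x (update σ i y₂)) * χ (Fin.append x (update σ j (bar y₁))) →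
    0 ≤ χ (Fin.append x σ) * χ (Fin.append x (update (update σ i y₁) j y₂)) := by
  intro i j
  have hi : (⟨m + n - 2, Nat.sub_lt h.rpos two_pos⟩ : Fin (m + n)) = Fin.natAdd m i :=
    Fin.ext (Nat.add_sub_assoc hn m)
  have hj : (⟨m + n - 1, Nat.sub_lt h.rpos one_pos⟩ : Fin (m + n)) = Fin.natAdd m j :=
    Fin.ext (Nat.add_sub_assoc (by omega) m)
  simpa only [hi, hj, update_append_natAdd] using h.c4 (Fin.append x σ) y₁ y₂

theorem comap_append {ι : Type*} (h : IsChirotope (m + n) α χ) (x : Fin m → α × Bool)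
    (hn : 2 ≤ n) (f : ι → α)
    (hf : ∀ e : ι, ∃ τ : Fin n → ι, (∃ i, τ i = e) ∧
      χ (Fin.append x fun i => (f (τ i), true)) ≠ 0) :
    IsChirotope n ι fun τ => χ (Fin.append x (Prod.map f id ∘ τ)) where
  rpos := by omega
  values _ := h.values _
  degenerate σ hσ := h.append_degenerate x _ fun hinj => hσ (Injective.of_comp hinj)
  c1 := hf
  c2neg σ i _ := by
    rw [comp_update]
    exact h.append_update_bar x (Prod.map f id ∘ σ) i
  c2swap σ i j hij := by
    convert h.append_update_update_bar x (Prod.map f id ∘ σ) hij using 3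
    ext1 k
    simp only [comp_apply, update_apply, bar_map]
    split_ifs <;> rfl
  c3 σ τ hσ hτ := by
    simpa only [comp_update, comp_apply] using h.append_exchange x (by omega) hσ hτ
  c4 σ y₁ y₂ := by
    simpa only [comp_update, bar_map] using
      h.append_grassmann_plucker x hn (Prod.map f id ∘ σ) (Prod.map f id y₁) (Prod.map f id y₂)

end Contraction

end IsChirotope

theorem fixing_coordinates_rank_two_general {m n : ℕ} (hn : 2 ≤ n)
    {χ : (Fin (m + n) → α × Bool) → ℤ} (h : IsChirotope (m + n) α χ) (x : Fin m → α × Bool)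
    {s : Set α}
    (hs : ∀ a, a ∈ s ↔ ∃ σ : Fin n → α × Bool, χ (Fin.append x σ) = 1 ∧ ∃ i, (σ i).1 = a) :
    IsChirotope n s fun τ => χ (Fin.append x (Prod.map Subtype.val id ∘ τ)) := by
  refine h.comap_append x hn Subtype.val ?_
  rintro ⟨a, ha⟩
  obtain ⟨σ, hσ, i, rfl⟩ := (hs a).1 ha
  refine ⟨fun j => ⟨(σ j).1, (hs _).2 ⟨σ, hσ, j, rfl⟩⟩, ⟨i, rfl⟩, ?_⟩
  refine h.apply_ne_zero_of_fst_eq (σ := Fin.append x σ) ?_ (by simp [hσ])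
  exact Fin.addCases (by simp) (by simp)

end

/-- fixing `r-2` coordinates of a chirotope of rank `r > 2` yields a
rank-2 chirotope. The set `C(x₁,…,x_{r-2}) = {[y_{r-1},y_r] : χ([x₁,…,x_{r-2},y_{r-1},y_r]) = 1}`
is the set of positively oriented bases of a chirotope of rank 2 over the subset of
`E` consisting of the elements appearing in some member of `C(x₁,…,x_{r-2})`. -/
theorem fixing_coordinates_rank_two {α : Type*} (r : ℕ) (hr : 2 < r)
    (χ : (Fin r → α × Bool) → ℤ) (h : IsChirotope r α χ)
    (x : Fin (r - 2) → α × Bool)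
    (hx : ∃ y₁ y₂ : α × Bool, χ (extTwo r x y₁ y₂) = 1) :
    IsChirotope 2
      {a : α | ∃ y₁ y₂ : α × Bool, χ (extTwo r x y₁ y₂) = 1 ∧ (y₁.1 = a ∨ y₂.1 = a)}
      (fun τ : Fin 2 →
          {a : α | ∃ y₁ y₂ : α × Bool, χ (extTwo r x y₁ y₂) = 1 ∧ (y₁.1 = a ∨ y₂.1 = a)} × Bool =>
        χ (extTwo r x (((τ 0).1 : α), (τ 0).2) (((τ 1).1 : α), (τ 1).2))) := by
  obtain ⟨m, rfl⟩ := Nat.exists_eq_add_of_le' hr.le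
  simpa only [append_eq_extTwo, Function.comp_apply, Prod.map, id] using
    fixing_coordinates_rank_two_general le_rfl h x fun a => by
      simp [append_eq_extTwo, Fin.exists_fin_two, Fin.exists_fin_succ_pi, -Prod.exists]
end
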